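/- Let C be a component of G such that F(μ) > 0 for every loop μ in C, and set a = min{F(μ) : μ a loop in C of length |μ| ≤ #C} (so a > 0). Then for all β' < β one has ρ(A(β')^C) ≥ e^{(β−β')a/#C} · ρ(A(β)^C); in particular β ↦ ρ(A(β)^C) is strictly decreasing, and moreover lim_{β→+∞} ρ(A(β)^C) = 0. -/

import Mathlib

open Filter Finset

/-- The spectral radius of a real matrix, `ρ(M) = lim_n ‖Mⁿ‖^{1/n}`
(computed with the entrywise ℓ¹-norm, and as a `limsup` so that it is always defined;
it is `0` for the matrix over the empty index type). -/
noncomputable def specRad {n : Type*} [Fintype n] [DecidableEq n] (M : Matrix n n ℝ) : ℝ :=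
  Filter.limsup (fun k : ℕ => (∑ i, ∑ j, |(M ^ k) i j|) ^ ((1 : ℝ) / (k : ℝ))) Filter.atTop

/-- The spectral radius `ρ(B^S)` of the submatrix of `B` obtained by restricting to `S × S`. -/
noncomputable def specRadOn {V : Type*} [Fintype V] (B : Matrix V V ℝ) (S : Set V) : ℝ :=
  letI : Fintype S := (Set.toFinite S).fintype
  letI : DecidableEq S := Classical.decEq _
  specRad (fun i j : S => B i.1 j.1)

variable {V E : Type*}

/-- Consecutive edges of the list match up: `r(eᵢ) = s(eᵢ₊₁)`. -/
def ChainOK (src rng : E → V) (μ : List E) : Prop :=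
  List.Chain' (fun e f => rng e = src f) μ

/-- A loop: a nonempty path `μ = e₁⋯eₙ` with `s(e₁) = r(eₙ)`. -/
def IsLoop (src rng : E → V) (μ : List E) : Prop :=
  ∃ h : μ ≠ [], ChainOK src rng μ ∧ src (μ.head h) = rng (μ.getLast h)

/-- A loop lying in the vertex set `C`. -/
def LoopIn (src rng : E → V) (C : Set V) (μ : List E) : Prop :=
  IsLoop src rng μ ∧ ∀ e ∈ μ, src e ∈ C ∧ rng e ∈ C

/-- `v ⤳ w`: there is a (possibly length-0) path from `v` to `w`. -/
def GReaches (src rng : E → V) (v w : V) : Prop :=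
  v = w ∨ ∃ μ : List E, ∃ h : μ ≠ [],
    ChainOK src rng μ ∧ src (μ.head h) = v ∧ rng (μ.getLast h) = w

/-- The closure of a set of vertices: all vertices that reach it. -/
def GClosure (src rng : E → V) (C : Set V) : Set V :=
  {v | ∃ w ∈ C, GReaches src rng v w}

/-- A component: an equivalence class of `v ∼ w` (mutual reachability) containing a loop. -/
def GIsComponent (src rng : E → V) (C : Set V) : Prop :=
  (∃ v, C = {w | GReaches src rng v w ∧ GReaches src rng w v}) ∧
  ∃ μ : List E, LoopIn src rng C μ

/-- The property that the loop `μ` witnesses circularity of the component `C`: `μ` is a simple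
loop visiting every vertex of `C`, and containing every edge of the graph joining vertices
of `C`. -/
def CircularWitness (src rng : E → V) (C : Set V) (μ : List E) : Prop :=
  LoopIn src rng C μ ∧ (μ.map src).Nodup ∧
  (∀ v ∈ C, v ∈ μ.map src) ∧
  (∀ e : E, src e ∈ C → rng e ∈ C → e ∈ μ)

/-- A circular component: a component containing, up to the choice of starting vertex,
exactly one loop. -/
def IsCircular (src rng : E → V) (C : Set V) : Prop :=
  GIsComponent src rng C ∧ ∃ μ : List E, CircularWitness src rng C μ

/-- The matrix `A(β)` with entries `A(β)_{vw} = Σ_{e : v → w} e^{-β F(e)}`. -/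
noncomputable def Amat [Fintype E] [DecidableEq V] (src rng : E → V) (F : E → ℝ) (β : ℝ) :
    Matrix V V ℝ :=
  fun v w => ∑ e ∈ Finset.univ.filter (fun e => src e = v ∧ rng e = w), Real.exp (-β * F e)

/-- `F` extended to paths: `F(e₁⋯eₙ) = F(e₁) + ⋯ + F(eₙ)`. -/
def Fpath (F : E → ℝ) (μ : List E) : ℝ := (μ.map F).sum

/-- Entrywise ℓ¹ norm. -/
noncomputable def l1n {n : Type*} [Fintype n] (M : Matrix n n ℝ) : ℝ := ∑ i, ∑ j, |M i j|

lemma l1n_nonneg {n : Type*} [Fintype n] (M : Matrix n n ℝ) : 0 ≤ l1n M :=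
  Finset.sum_nonneg fun _ _ => Finset.sum_nonneg fun _ _ => abs_nonneg _

lemma entry_le_l1n {n : Type*} [Fintype n] (M : Matrix n n ℝ) (i j : n) : |M i j| ≤ l1n M := by
  calc |M i j| ≤ ∑ j, |M i j| :=
        Finset.single_le_sum (f := fun j => |M i j|) (fun _ _ => abs_nonneg _) (Finset.mem_univ j)
    _ ≤ _ := Finset.single_le_sum (f := fun i => ∑ j, |M i j|)
        (fun _ _ => Finset.sum_nonneg fun _ _ => abs_nonneg _) (Finset.mem_univ i)

lemma l1n_mul {n : Type*} [Fintype n] (M N : Matrix n n ℝ) : l1n (M * N) ≤ l1n M * l1n N := by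
  unfold l1n
  rw [Finset.sum_mul]
  refine Finset.sum_le_sum fun i _ => ?_
  calc ∑ j, |(M * N) i j| ≤ ∑ j, ∑ k, |M i k| * |N k j| := by
        refine Finset.sum_le_sum fun j _ => ?_
        rw [Matrix.mul_apply]
        refine (Finset.abs_sum_le_sum_abs _ _).trans (le_of_eq ?_)
        simp [abs_mul]
    _ = ∑ k, |M i k| * ∑ j, |N k j| := by
        rw [Finset.sum_comm]
        simp [Finset.mul_sum]
    _ ≤ ∑ k, |M i k| * ∑ k, ∑ j, |N k j| := by
        refine Finset.sum_le_sum fun k _ => ?_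
        refine mul_le_mul_of_nonneg_left ?_ (abs_nonneg _)
        exact Finset.single_le_sum (f := fun k => ∑ j, |N k j|)
          (fun _ _ => Finset.sum_nonneg fun _ _ => abs_nonneg _) (Finset.mem_univ k)
    _ = _ := by rw [Finset.sum_mul]

lemma l1n_pow {n : Type*} [Fintype n] [DecidableEq n] (M : Matrix n n ℝ) (k : ℕ) :
    l1n (M ^ (k + 1)) ≤ l1n M ^ (k + 1) := by
  induction k with
  | zero => simp
  | succ k ih =>
    rw [pow_succ, pow_succ (l1n M)]
    exact (l1n_mul _ _).trans (mul_le_mul_of_nonneg_right ih (l1n_nonneg _))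

lemma specRad_eq {n : Type*} [Fintype n] [DecidableEq n] (M : Matrix n n ℝ) :
    specRad M = Filter.limsup (fun k : ℕ => l1n (M ^ k) ^ ((1 : ℝ) / (k : ℝ))) Filter.atTop := rfl

lemma sr_bdd {n : Type*} [Fintype n] [DecidableEq n] (M : Matrix n n ℝ) :
    IsBoundedUnder (· ≤ ·) atTop (fun k : ℕ => l1n (M ^ k) ^ ((1 : ℝ) / (k : ℝ))) := by
  refine isBoundedUnder_of_eventually_le (a := l1n M) ?_
  filter_upwards [eventually_ge_atTop 1] with k hk
  obtain ⟨m, rfl⟩ := Nat.exists_eq_add_of_le' hk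
  calc _ ≤ (l1n M ^ (m + 1)) ^ ((1 : ℝ) / ((m + 1 : ℕ) : ℝ)) :=
        Real.rpow_le_rpow (l1n_nonneg _) (l1n_pow M m) (by positivity)
    _ = l1n M := by
        rw [one_div]
        exact Real.pow_rpow_inv_natCast (l1n_nonneg _) (by omega)

lemma sr_cobdd {n : Type*} [Fintype n] [DecidableEq n] (M : Matrix n n ℝ) :
    IsCoboundedUnder (· ≤ ·) atTop (fun k : ℕ => l1n (M ^ k) ^ ((1 : ℝ) / (k : ℝ))) := by
  apply IsBoundedUnder.isCoboundedUnder_le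
  exact isBoundedUnder_of_eventually_ge (a := 0)
    (Eventually.of_forall fun k => Real.rpow_nonneg (l1n_nonneg _) _)

lemma pow_entry_nonneg {n : Type*} [Fintype n] [DecidableEq n] {M : Matrix n n ℝ}
    (hM : ∀ i j, 0 ≤ M i j) (k : ℕ) : ∀ i j, 0 ≤ (M ^ k) i j := by
  induction k with
  | zero =>
    intro i j
    rw [pow_zero, Matrix.one_apply]
    split_ifs <;> norm_num
  | succ k ih =>
    intro i j
    rw [pow_succ, Matrix.mul_apply]
    exact Finset.sum_nonneg fun l _ => mul_nonneg (ih _ _) (hM _ _)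

lemma pow_entry_le {n : Type*} [Fintype n] [DecidableEq n] {M N : Matrix n n ℝ}
    (hM : ∀ i j, 0 ≤ M i j) (hN : ∀ i j, 0 ≤ N i j) (c : ℝ) (hc : 0 < c) (φ : n → ℝ)
    (h : ∀ i j, M i j ≤ c * (Real.exp (φ j - φ i) * N i j)) (k : ℕ) :
    ∀ i j, (M ^ k) i j ≤ c ^ k * (Real.exp (φ j - φ i) * (N ^ k) i j) := by
  induction k with
  | zero =>
    intro i j
    by_cases hij : i = j
    · subst hij; simp
    · simp [hij]
  | succ k ih =>
    intro i j
    rw [pow_succ, pow_succ N, Matrix.mul_apply, Matrix.mul_apply, Finset.mul_sum, Finset.mul_sum]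
    refine Finset.sum_le_sum fun l _ => ?_
    calc (M ^ k) i l * M l j ≤ (c ^ k * (Real.exp (φ l - φ i) * (N ^ k) i l)) *
          (c * (Real.exp (φ j - φ l) * N l j)) :=
          mul_le_mul (ih i l) (h l j) (hM _ _)
            (mul_nonneg (by positivity) (mul_nonneg (by positivity) (pow_entry_nonneg hN k _ _)))
      _ = c ^ (k + 1) * (Real.exp ((φ l - φ i) + (φ j - φ l)) * ((N ^ k) i l * N l j)) := by
          rw [Real.exp_add]; ring
      _ = _ := by ring_nf

lemma specRad_le_of_conj {n : Type*} [Fintype n] [DecidableEq n] {M N : Matrix n n ℝ}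
    (hM : ∀ i j, 0 ≤ M i j) (hN : ∀ i j, 0 ≤ N i j) (c : ℝ) (hc : 0 < c) (φ : n → ℝ)
    (h : ∀ i j, M i j ≤ c * (Real.exp (φ j - φ i) * N i j)) :
    specRad M ≤ c * specRad N := by
  set K : ℝ := 1 + ∑ i, ∑ j, Real.exp (φ j - φ i) with hK
  have hs : 0 ≤ ∑ i, ∑ j, Real.exp (φ j - φ i) :=
    Finset.sum_nonneg fun _ _ => Finset.sum_nonneg fun _ _ => (Real.exp_pos _).le
  have hKpos : 0 < K := by linarith
  have hKle : ∀ i j, Real.exp (φ j - φ i) ≤ K := by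
    intro i j
    have := entry_le_l1n (fun i j => Real.exp (φ j - φ i)) i j
    simp only [l1n, Real.abs_exp] at this
    linarith
  have hl : ∀ k, l1n (M ^ k) ≤ K * (c ^ k * l1n (N ^ k)) := by
    intro k
    simp only [l1n, Finset.mul_sum]
    refine Finset.sum_le_sum fun i _ => Finset.sum_le_sum fun j _ => ?_
    rw [abs_of_nonneg (pow_entry_nonneg hM k i j), abs_of_nonneg (pow_entry_nonneg hN k i j)]
    have h1 := pow_entry_le hM hN c hc φ h k i j
    have h2 : c ^ k * (Real.exp (φ j - φ i) * (N ^ k) i j) ≤ c ^ k * (K * (N ^ k) i j) :=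
      mul_le_mul_of_nonneg_left
        (mul_le_mul_of_nonneg_right (hKle i j) (pow_entry_nonneg hN k i j)) (by positivity)
    linarith
  have ht : Tendsto (fun k : ℕ => K ^ ((1 : ℝ) / (k : ℝ)) * c) atTop (nhds c) := by
    have h1 : Tendsto (fun k : ℕ => (1 : ℝ) / (k : ℝ)) atTop (nhds 0) :=
      tendsto_one_div_atTop_nhds_zero_nat
    have h2 := (Real.continuousAt_const_rpow (a := K) (b := 0) hKpos.ne').tendsto.comp h1
    simpa using h2.mul_const c
  have hv0 : 0 ≤ᶠ[atTop] (fun k : ℕ => l1n (N ^ k) ^ ((1 : ℝ) / (k : ℝ))) :=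
    Eventually.of_forall fun k => Real.rpow_nonneg (l1n_nonneg _) _
  have hu0 : 0 ≤ᶠ[atTop] (fun k : ℕ => K ^ ((1 : ℝ) / (k : ℝ)) * c) :=
    Eventually.of_forall fun k => by
      simp only [Pi.zero_apply]; positivity
  have hmul := limsup_mul_le (f := atTop) (u := fun k : ℕ => K ^ ((1 : ℝ) / (k : ℝ)) * c)
    (v := fun k : ℕ => l1n (N ^ k) ^ ((1 : ℝ) / (k : ℝ)))
    hu0.frequently ht.isBoundedUnder_le hv0 (sr_bdd N)
  rw [ht.limsup_eq, ← specRad_eq] at hmul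
  refine le_trans ?_ hmul
  rw [specRad_eq]
  refine limsup_le_limsup ?_ (sr_cobdd M)
    (isBoundedUnder_le_mul_of_nonneg hu0.frequently ht.isBoundedUnder_le hv0 (sr_bdd N))
  filter_upwards [eventually_ge_atTop 1] with k hk
  calc l1n (M ^ k) ^ ((1 : ℝ) / (k : ℝ)) ≤ (K * (c ^ k * l1n (N ^ k))) ^ ((1 : ℝ) / (k : ℝ)) :=
        Real.rpow_le_rpow (l1n_nonneg _) (hl k) (by positivity)
    _ = K ^ ((1 : ℝ) / (k : ℝ)) * c * l1n (N ^ k) ^ ((1 : ℝ) / (k : ℝ)) := by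
        rw [Real.mul_rpow hKpos.le (mul_nonneg (by positivity) (l1n_nonneg _)),
          Real.mul_rpow (by positivity) (l1n_nonneg _), one_div,
          Real.pow_rpow_inv_natCast hc.le (by omega)]
        ring

lemma specRad_pos {n : Type*} [Fintype n] [DecidableEq n] {M : Matrix n n ℝ}
    (hM : ∀ i j, 0 ≤ M i j) (i : n) (l : ℕ) (hl : 0 < l) (h : 0 < (M ^ l) i i) :
    0 < specRad M := by
  have hdiag : ∀ m : ℕ, ((M ^ l) i i) ^ m ≤ (M ^ (l * m)) i i := by
    intro m
    induction m with
    | zero => simp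
    | succ m ih =>
      rw [Nat.mul_succ, pow_add M, Matrix.mul_apply, pow_succ ((M ^ l) i i)]
      refine le_trans (mul_le_mul_of_nonneg_right ih h.le) ?_
      exact Finset.single_le_sum (f := fun j => (M ^ (l * m)) i j * (M ^ l) j i)
        (fun j _ => mul_nonneg (pow_entry_nonneg hM _ _ _) (pow_entry_nonneg hM _ _ _))
        (Finset.mem_univ i)
  have hpos : 0 < ((M ^ l) i i) ^ ((1 : ℝ) / (l : ℝ)) := Real.rpow_pos_of_pos h _
  refine lt_of_lt_of_le hpos ?_
  rw [specRad_eq]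
  refine le_limsup_of_frequently_le ?_ (sr_bdd M)
  rw [frequently_atTop]
  intro N
  refine ⟨l * (N + 1), by nlinarith, ?_⟩
  have h1 : ((M ^ l) i i) ^ (N + 1) ≤ l1n (M ^ (l * (N + 1))) :=
    (hdiag _).trans ((le_abs_self _).trans (entry_le_l1n _ i i))
  calc ((M ^ l) i i) ^ ((1 : ℝ) / (l : ℝ))
      = (((M ^ l) i i) ^ (N + 1)) ^ ((1 : ℝ) / ((l * (N + 1) : ℕ) : ℝ)) := by
        rw [← Real.rpow_natCast, ← Real.rpow_mul h.le]
        congr 1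
        have : (l : ℝ) ≠ 0 := by positivity
        push_cast
        have : (N : ℝ) + 1 ≠ 0 := by positivity
        field_simp
    _ ≤ _ := Real.rpow_le_rpow (by positivity) h1 (by positivity)

/-- `μ` is a path from `v` to `w`. -/
def Wk {V E : Type*} (src rng : E → V) : V → List E → V → Prop
  | v, [], w => v = w
  | v, e :: μ, w => src e = v ∧ Wk src rng (rng e) μ w

lemma wk_append {V E : Type*} {src rng : E → V} (p q : List E) (v w : V) :
    Wk src rng v (p ++ q) w ↔ ∃ u, Wk src rng v p u ∧ Wk src rng u q w := by
  induction p generalizing v with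
  | nil => simp [Wk]
  | cons e p ih => simp [Wk, ih, and_assoc]

lemma wk_chain {V E : Type*} {src rng : E → V} (μ : List E) (h : μ ≠ []) (v w : V) :
    Wk src rng v μ w ↔ (ChainOK src rng μ ∧ src (μ.head h) = v ∧ rng (μ.getLast h) = w) := by
  unfold ChainOK List.Chain'
  induction μ generalizing v with
  | nil => exact absurd rfl h
  | cons e μ ih =>
    cases μ with
    | nil => simp [Wk]
    | cons f μ =>
      have := ih (by simp) (rng e)
      rw [Wk, this]
      simp only [List.isChain_cons_cons, List.head_cons, List.getLast_cons_cons]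
      constructor
      · rintro ⟨a, b, c, d⟩; exact ⟨⟨c.symm, b⟩, a, d⟩
      · rintro ⟨⟨c, b⟩, a, d⟩; exact ⟨a, b, c.symm, d⟩

/-- All edges of `μ` lie in `C`. -/
def EIn {V E : Type*} (src rng : E → V) (C : Set V) (μ : List E) : Prop :=
  ∀ e ∈ μ, src e ∈ C ∧ rng e ∈ C

lemma loopIn_of_wk {V E : Type*} {src rng : E → V} {C : Set V} {μ : List E} {v : V}
    (h : μ ≠ []) (hw : Wk src rng v μ v) (hi : EIn src rng C μ) : LoopIn src rng C μ := by
  obtain ⟨a, b, c⟩ := (wk_chain μ h v v).1 hw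
  exact ⟨⟨h, a, b.trans c.symm⟩, hi⟩

lemma split_of_not_nodup {V E : Type*} (f : E → V) (μ : List E) (h : ¬ (μ.map f).Nodup) :
    ∃ p e q g r, μ = p ++ ((e :: q) ++ (g :: r)) ∧ f e = f g := by
  induction μ with
  | nil => simp at h
  | cons x l ih =>
    by_cases hx : f x ∈ l.map f
    · obtain ⟨g, hg, hgx⟩ := List.mem_map.1 hx
      obtain ⟨s, t, rfl⟩ := List.mem_iff_append.1 hg
      exact ⟨[], x, s, g, t, by simp, hgx.symm⟩
    · have : ¬ (l.map f).Nodup := by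
        intro hn; apply h; simp only [List.map_cons, List.nodup_cons]; exact ⟨hx, hn⟩
      obtain ⟨p, e, q, g, r, rfl, he⟩ := ih this
      exact ⟨x :: p, e, q, g, r, by simp, he⟩

lemma length_le_of_nodup {V E : Type*} [Fintype V] {src rng : E → V} {C : Set V} {μ : List E}
    (hi : EIn src rng C μ) (h : (μ.map src).Nodup) : μ.length ≤ C.ncard := by
  classical
  have h1 : (μ.map src).toFinset.card = μ.length := by
    rw [List.toFinset_card_of_nodup h, List.length_map]
  rw [← h1, ← Set.ncard_coe_finset]
  refine Set.ncard_le_ncard ?_ (Set.toFinite _)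
  intro x hx
  simp only [List.coe_toFinset, Set.mem_ofPred_eq, List.mem_map] at hx
  obtain ⟨e, he, rfl⟩ := hx
  exact (hi e he).1

lemma split_walk {V E : Type*} {src rng : E → V} {C : Set V} {μ : List E} {v w : V}
    (hw : Wk src rng v μ w) (hi : EIn src rng C μ) (h : ¬ (μ.map src).Nodup) (G : E → ℝ) :
    ∃ q ν u, q ≠ [] ∧ ν ≠ [] ∧ q.length < μ.length ∧ ν.length < μ.length ∧ Wk src rng u q u ∧
      EIn src rng C q ∧ Wk src rng v ν w ∧ EIn src rng C ν ∧
      Fpath G μ = Fpath G q + Fpath G ν := by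
  obtain ⟨p, e, q, g, r, rfl, he⟩ := split_of_not_nodup src μ h
  obtain ⟨u, hp, hqr⟩ := (wk_append _ _ _ _).1 hw
  obtain ⟨x, hq, hr⟩ := (wk_append _ _ _ _).1 hqr
  have hu : src e = u := hq.1
  have hx : src g = x := hr.1
  have hux : x = u := by rw [← hx, ← hu, he]
  subst hux
  refine ⟨e :: q, p ++ (g :: r), x, by simp, by simp, by simp; omega, by simp, hq, ?_,
    (wk_append _ _ _ _).2 ⟨x, hp, hr⟩, ?_, ?_⟩
  · intro y hy; apply hi; simp only [List.mem_append]; tauto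
  · intro y hy; apply hi; simp only [List.mem_append] at hy ⊢; tauto
  · simp [Fpath]; ring

lemma loop_nonneg {V E : Type*} [Fintype V] {src rng : E → V} {C : Set V} (G : E → ℝ)
    (hG : ∀ μ, LoopIn src rng C μ → μ.length ≤ C.ncard → 0 ≤ Fpath G μ) :
    ∀ n : ℕ, ∀ (μ : List E) (v : V), μ.length ≤ n → μ ≠ [] → Wk src rng v μ v →
      EIn src rng C μ → 0 ≤ Fpath G μ := by
  intro n
  induction n with
  | zero => intro μ v h hne; exact absurd (List.length_eq_zero_iff.1 (by omega)) hne
  | succ n ih =>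
    intro μ v hlen hne hw hi
    by_cases hn : (μ.map src).Nodup
    · exact hG μ (loopIn_of_wk hne hw hi) (length_le_of_nodup hi hn)
    · obtain ⟨q, ν, u, hq, hν, hql, hνl, hqw, hqi, hνw, hνi, hs⟩ := split_walk hw hi hn G
      have h1 := ih q u (by omega) hq hqw hqi
      have h2 := ih ν v (by omega) hν hνw hνi
      linarith

lemma walk_bound {V E : Type*} [Fintype V] [Fintype E] {src rng : E → V} {C : Set V} (G : E → ℝ)
    (hG : ∀ μ, LoopIn src rng C μ → μ.length ≤ C.ncard → 0 ≤ Fpath G μ) :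
    ∀ n : ℕ, ∀ (μ : List E) (v w : V), μ.length ≤ n → Wk src rng v μ w →
      EIn src rng C μ → - (C.ncard * ∑ e, |G e|) ≤ Fpath G μ := by
  have hS : 0 ≤ ∑ e, |G e| := Finset.sum_nonneg fun _ _ => abs_nonneg _
  have hb : ∀ μ : List E, - (μ.length * ∑ e, |G e|) ≤ Fpath G μ := by
    intro μ
    induction μ with
    | nil => simp [Fpath]
    | cons e μ ih =>
      have h1 : |G e| ≤ ∑ e, |G e| :=
        Finset.single_le_sum (f := fun e => |G e|) (fun _ _ => abs_nonneg _) (Finset.mem_univ e)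
      have h2 := neg_abs_le (G e)
      simp only [Fpath, List.map_cons, List.sum_cons, List.length_cons] at ih ⊢
      push_cast
      linarith
  have hnd : ∀ μ : List E, EIn src rng C μ → (μ.map src).Nodup →
      - (C.ncard * ∑ e, |G e|) ≤ Fpath G μ := by
    intro μ hi hn
    have h1 : (μ.length : ℝ) ≤ C.ncard := by exact_mod_cast length_le_of_nodup hi hn
    have h2 := mul_le_mul_of_nonneg_right h1 hS
    linarith [hb μ]
  intro n
  induction n with
  | zero =>
    intro μ v w h hw hi
    refine hnd μ hi ?_
    rw [List.length_eq_zero_iff.1 (by omega : μ.length = 0)]; simp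
  | succ n ih =>
    intro μ v w hlen hw hi
    by_cases hn : (μ.map src).Nodup
    · exact hnd μ hi hn
    · obtain ⟨q, ν, u, hq, hν, hql, hνl, hqw, hqi, hνw, hνi, hs⟩ := split_walk hw hi hn G
      have h1 := loop_nonneg G hG q.length q u le_rfl hq hqw hqi
      have h2 := ih ν v w (by omega) hνw hνi
      linarith

lemma exists_potential {V E : Type*} [Fintype V] [Fintype E] {src rng : E → V} {C : Set V}
    (G : E → ℝ) (hG : ∀ μ, LoopIn src rng C μ → μ.length ≤ C.ncard → 0 ≤ Fpath G μ) :
    ∃ φ : V → ℝ, ∀ e, src e ∈ C → rng e ∈ C → φ (src e) - φ (rng e) ≤ G e := by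
  let T : V → Set ℝ := fun v => {x | ∃ μ w, Wk src rng v μ w ∧ EIn src rng C μ ∧ Fpath G μ = x}
  have hT : ∀ v, BddBelow (T v) := by
    intro v
    refine ⟨- (C.ncard * ∑ e, |G e|), ?_⟩
    rintro x ⟨μ, w, hw, hi, rfl⟩
    exact walk_bound G hG _ μ v w le_rfl hw hi
  refine ⟨fun v => sInf (T v), fun e h1 h2 => ?_⟩
  have : sInf (T (src e)) - G e ≤ sInf (T (rng e)) := by
    refine le_csInf ⟨0, [], rng e, rfl, by simp [EIn], by simp [Fpath]⟩ ?_
    rintro x ⟨μ, w, hw, hi, rfl⟩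
    have : sInf (T (src e)) ≤ Fpath G (e :: μ) := by
      refine csInf_le (hT _) ⟨e :: μ, w, ⟨rfl, hw⟩, ?_, rfl⟩
      intro y hy
      rcases List.mem_cons.1 hy with rfl | hy
      · exact ⟨h1, h2⟩
      · exact hi y hy
    simp only [Fpath, List.map_cons, List.sum_cons] at this ⊢
    linarith
  show sInf (T (src e)) - sInf (T (rng e)) ≤ G e
  linarith

lemma Amat_nonneg {V E : Type*} [Fintype E] [DecidableEq V] (src rng : E → V) (F : E → ℝ) (β : ℝ)
    (i j : V) : 0 ≤ Amat src rng F β i j :=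
  Finset.sum_nonneg fun _ _ => (Real.exp_pos _).le

lemma sub_pow_pos {V E : Type*} [Fintype E] [DecidableEq V] (src rng : E → V) (F : E → ℝ) (β : ℝ)
    (C : Set V) [Fintype C] [DecidableEq C] (M : Matrix C C ℝ)
    (hM : ∀ i j : C, M i j = Amat src rng F β i.1 j.1) (μ : List E) (hi : EIn src rng C μ) :
    ∀ v w : C, Wk src rng v.1 μ w.1 → 0 < (M ^ μ.length) v w := by
  have hM0 : ∀ i j, 0 ≤ M i j := fun i j => by
    rw [hM]; exact Amat_nonneg _ _ _ _ _ _
  induction μ with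
  | nil =>
    intro v w h
    have : v = w := Subtype.ext h
    subst this; simp
  | cons e μ ih =>
    rintro v w ⟨h1, h2⟩
    have he := hi e (by simp)
    have hp := ih (fun y hy => hi y (by simp [hy])) ⟨rng e, he.2⟩ w h2
    rw [List.length_cons, pow_succ', Matrix.mul_apply]
    refine lt_of_lt_of_le (mul_pos ?_ hp) (Finset.single_le_sum
      (f := fun j : C => M v j * (M ^ μ.length) j w)
      (fun j _ => mul_nonneg (hM0 _ _) (pow_entry_nonneg hM0 _ _ _)) (Finset.mem_univ _))
    rw [hM]
    exact Finset.sum_pos (fun _ _ => Real.exp_pos _) ⟨e, by simp [h1]⟩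

/-- If all loops of a component `C` have `F(μ) > 0` and `a` is the minimum of `F(μ)` over
loops of `C` of length `≤ #C` (so `a > 0`), then `ρ(A(β')^C) ≥ e^{(β-β')a/#C} ρ(A(β)^C)`
for `β' < β`; in particular `β ↦ ρ(A(β)^C)` is strictly decreasing, and it tends to `0` at
`+∞`. -/
theorem specRad_component_strictAnti {V E : Type*} [Fintype V] [DecidableEq V] [Fintype E]
    (src rng : E → V) (F : E → ℝ)
    (C : Set V) (hC : GIsComponent src rng C)
    (hF : ∀ μ : List E, LoopIn src rng C μ → 0 < Fpath F μ)
    (a : ℝ)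
    (ha : IsLeast {x : ℝ | ∃ μ : List E,
      LoopIn src rng C μ ∧ μ.length ≤ C.ncard ∧ Fpath F μ = x} a) :
    0 < a ∧
    (∀ β' β : ℝ, β' < β →
      Real.exp ((β - β') * a / C.ncard) * specRadOn (Amat src rng F β) C ≤
        specRadOn (Amat src rng F β') C) ∧
    StrictAnti (fun β : ℝ => specRadOn (Amat src rng F β) C) ∧
    Filter.Tendsto (fun β : ℝ => specRadOn (Amat src rng F β) C)
      Filter.atTop (nhds 0) := by
  obtain ⟨-, μ₀, hμ₀⟩ := hC
  have ha0 : 0 < a := by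
    obtain ⟨μ, h1, -, rfl⟩ := ha.1
    exact hF μ h1
  obtain ⟨⟨hne, hch, hcl⟩, hin⟩ := hμ₀
  have hw0 : Wk src rng (src (μ₀.head hne)) μ₀ (src (μ₀.head hne)) :=
    (wk_chain μ₀ hne _ _).2 ⟨hch, rfl, hcl.symm⟩
  have hv0 : src (μ₀.head hne) ∈ C := (hin _ (List.head_mem hne)).1
  have hn : 0 < C.ncard := (Set.ncard_pos (Set.toFinite _)).2 ⟨_, hv0⟩
  have hnR : (0 : ℝ) < C.ncard := by exact_mod_cast hn
  have hpos : ∀ β, 0 < specRadOn (Amat src rng F β) C := by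
    intro β
    letI : Fintype C := (Set.toFinite C).fintype
    letI : DecidableEq C := Classical.decEq _
    exact specRad_pos (fun _ _ => Amat_nonneg _ _ _ _ _ _) ⟨_, hv0⟩ μ₀.length
      (List.length_pos_iff.2 hne) (sub_pow_pos src rng F β C _ (fun _ _ => rfl) μ₀ hin ⟨_, hv0⟩ ⟨_, hv0⟩ hw0)
  obtain ⟨φ, hφ⟩ := exists_potential (src := src) (rng := rng) (C := C)
    (fun e => F e - a / C.ncard) (by
      intro μ hμ hlen
      have h1 : a ≤ Fpath F μ := ha.2 ⟨μ, hμ, hlen, rfl⟩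
      have h2 : ∀ ν : List E, Fpath (fun e => F e - a / C.ncard) ν
          = Fpath F ν - ν.length * (a / C.ncard) := by
        intro ν
        induction ν with
        | nil => simp [Fpath]
        | cons e ν ih =>
          simp only [Fpath, List.map_cons, List.sum_cons, List.length_cons] at ih ⊢
          push_cast
          linarith
      have h3 : (μ.length : ℝ) * (a / C.ncard) ≤ C.ncard * (a / C.ncard) :=
        mul_le_mul_of_nonneg_right (by exact_mod_cast hlen) (by positivity)
      rw [mul_div_cancel₀ a hnR.ne'] at h3
      rw [h2]
      linarith)
  have hmain : ∀ β' β : ℝ, β' < β →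
      specRadOn (Amat src rng F β) C ≤
        Real.exp (-((β - β') * a / C.ncard)) * specRadOn (Amat src rng F β') C := by
    intro β' β hβ
    letI : Fintype C := (Set.toFinite C).fintype
    letI : DecidableEq C := Classical.decEq _
    refine specRad_le_of_conj (fun _ _ => Amat_nonneg _ _ _ _ _ _)
      (fun _ _ => Amat_nonneg _ _ _ _ _ _) _ (Real.exp_pos _)
      (fun v : C => (β - β') * φ v.1) ?_
    intro i j
    show Amat src rng F β i.1 j.1 ≤ _ * (_ * Amat src rng F β' i.1 j.1)
    unfold Amat
    rw [Finset.mul_sum, Finset.mul_sum]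
    refine Finset.sum_le_sum fun e he => ?_
    obtain ⟨hs, hr⟩ := (Finset.mem_filter.1 he).2
    have h1 := hφ e (hs ▸ i.2) (hr ▸ j.2)
    rw [hs, hr] at h1
    rw [← Real.exp_add, ← Real.exp_add, Real.exp_le_exp]
    have h2 := mul_le_mul_of_nonneg_left h1 (sub_pos.2 hβ).le
    have h3 : (β - β') * a / C.ncard = (β - β') * (a / C.ncard) := by ring
    rw [h3]
    linarith
  have hineq : ∀ β' β : ℝ, β' < β →
      Real.exp ((β - β') * a / C.ncard) * specRadOn (Amat src rng F β) C ≤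
        specRadOn (Amat src rng F β') C := by
    intro β' β hβ
    have h1 := mul_le_mul_of_nonneg_left (hmain β' β hβ)
      (Real.exp_pos ((β - β') * a / C.ncard)).le
    rwa [← mul_assoc, ← Real.exp_add, add_neg_cancel, Real.exp_zero, one_mul] at h1
  refine ⟨ha0, hineq, ?_, ?_⟩
  · intro β' β hβ
    have h1 := hineq β' β hβ
    have h2 : 1 < Real.exp ((β - β') * a / C.ncard) := by
      rw [Real.one_lt_exp_iff]
      have := sub_pos.2 hβ
      positivity
    have h3 := mul_lt_mul_of_pos_right h2 (hpos β)
    show specRadOn (Amat src rng F β) C < specRadOn (Amat src rng F β') C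
    linarith
  · have hlim : Tendsto (fun β : ℝ => Real.exp (-((β - 0) * a / C.ncard)) *
        specRadOn (Amat src rng F 0) C) atTop (nhds 0) := by
      have h1 : Tendsto (fun β : ℝ => (β - 0) * a / C.ncard) atTop atTop := by
        have := (tendsto_id (α := ℝ) (x := atTop)).atTop_mul_const (div_pos ha0 hnR)
        refine this.congr fun β => ?_
        simp only [id]; ring
      have h2 := (Real.tendsto_exp_neg_atTop_nhds_zero.comp h1).mul_const
        (specRadOn (Amat src rng F 0) C)
      simpa using h2
    refine tendsto_of_tendsto_of_tendsto_of_le_of_le' tendsto_const_nhds hlim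
      (Eventually.of_forall fun β => (hpos β).le) ?_
    filter_upwards [eventually_gt_atTop 0] with β hβ
    exact hmain 0 β hβ
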